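/- Let G be a simple graph that is S_{1,1,2}-free (chair-free) and C_4-free (contains no induced cycle on four vertices). Suppose a vertex x has three pairwise non-adjacent neighbours y, u, v. Then every neighbour w of u satisfies: w = x, or w is adjacent to x, or w is adjacent to y. -/

import Mathlib

/-- The chair `S_{1,1,2}`: centre `0` adjacent to `1`, `2` and `3`, with the
extra edge `3-4`. -/
def chair : SimpleGraph (Fin 5) :=
  SimpleGraph.fromEdgeSet {s(0, 1), s(0, 2), s(0, 3), s(3, 4)}

/-- The cycle `C_4` on four vertices. -/
def C4 : SimpleGraph (Fin 4) :=
  SimpleGraph.fromEdgeSet {s(0, 1), s(1, 2), s(2, 3), s(3, 0)}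

/-!
A neighbour `w` of `u` with `w` adjacent to neither `x` nor `y` would complete `x`, `y`, `u`, `v` to
an induced subgraph of one of the two kinds: an induced cycle `x u w v` if `w` is adjacent to `v`,
and otherwise a chair with centre `x`, leaves `y`, `v` and path `x u w`.
-/

section InducedSubgraphs

open scoped SimpleGraph

variable {V W : Type*} {G : SimpleGraph V} {H : SimpleGraph W}

theorem isIndContained_of_adj_iff {f : W → V} (hadj : ∀ i j, G.Adj (f i) (f j) ↔ H.Adj i j)
    (htwins : ∀ i j, i ≠ j → H.neighborSet i = H.neighborSet j → f i ≠ f j) : H ⊴ G := by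
  have hf : Function.Injective f := by
    intro i j hij
    by_contra hne
    have hnbr : H.neighborSet i = H.neighborSet j := by
      ext k
      rw [SimpleGraph.mem_neighborSet, SimpleGraph.mem_neighborSet, ← hadj, ← hadj, hij]
    exact htwins i j hne hnbr hij
  exact ⟨⟨⟨f, hf⟩, hadj _ _⟩⟩

theorem eq_of_chair_neighborSet_eq {i j : Fin 5} (hij : i ≠ j)
    (h : chair.neighborSet i = chair.neighborSet j) : s(i, j) = s(1, 2) := by
  simp only [Set.ext_iff, SimpleGraph.mem_neighborSet, chair, SimpleGraph.fromEdgeSet_adj,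
    Set.mem_insert_iff, Set.mem_singleton_iff] at h
  decide +revert

theorem eq_of_C4_neighborSet_eq {i j : Fin 4} (hij : i ≠ j)
    (h : C4.neighborSet i = C4.neighborSet j) : s(i, j) = s(0, 2) ∨ s(i, j) = s(1, 3) := by
  simp only [Set.ext_iff, SimpleGraph.mem_neighborSet, C4, SimpleGraph.fromEdgeSet_adj,
    Set.mem_insert_iff, Set.mem_singleton_iff] at h
  decide +revert

theorem chair_isIndContained {c a b p q : V} (hab : a ≠ b)
    (hca : G.Adj c a) (hcb : G.Adj c b) (hcp : G.Adj c p) (hpq : G.Adj p q)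
    (hnab : ¬G.Adj a b) (hnap : ¬G.Adj a p) (hnbp : ¬G.Adj b p)
    (hncq : ¬G.Adj c q) (hnaq : ¬G.Adj a q) (hnbq : ¬G.Adj b q) : chair ⊴ G := by
  have hadj (i j) : G.Adj (![c, a, b, p, q] i) (![c, a, b, p, q] j) ↔ chair.Adj i j := by
    fin_cases i <;> fin_cases j <;> simp_all [chair, G.adj_comm]
  refine isIndContained_of_adj_iff hadj fun i j hij hnbr ↦ ?_
  obtain ⟨rfl, rfl⟩ | ⟨rfl, rfl⟩ := Sym2.eq_iff.mp (eq_of_chair_neighborSet_eq hij hnbr)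
  · exact hab
  · exact hab.symm

theorem C4_isIndContained {w x y z : V} (hwy : w ≠ y) (hxz : x ≠ z)
    (hwx : G.Adj w x) (hxy : G.Adj x y) (hyz : G.Adj y z) (hzw : G.Adj z w)
    (hnwy : ¬G.Adj w y) (hnxz : ¬G.Adj x z) : C4 ⊴ G := by
  have hadj (i j) : G.Adj (![w, x, y, z] i) (![w, x, y, z] j) ↔ C4.Adj i j := by
    fin_cases i <;> fin_cases j <;> simp_all [C4, G.adj_comm]
  refine isIndContained_of_adj_iff hadj fun i j hij hnbr ↦ ?_
  rcases eq_of_C4_neighborSet_eq hij hnbr with h | h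
  · obtain ⟨rfl, rfl⟩ | ⟨rfl, rfl⟩ := Sym2.eq_iff.mp h
    exacts [hwy, hwy.symm]
  · obtain ⟨rfl, rfl⟩ | ⟨rfl, rfl⟩ := Sym2.eq_iff.mp h
    exacts [hxz, hxz.symm]

theorem stmt_15_general (hchair : ¬chair ⊴ G) (hC4 : ¬C4 ⊴ G) {x y u v w : V}
    (hyv : y ≠ v) (huv : u ≠ v) (hxy : G.Adj x y) (hxu : G.Adj x u) (hxv : G.Adj x v)
    (hnyu : ¬G.Adj y u) (hnyv : ¬G.Adj y v) (hnuv : ¬G.Adj u v) (huw : G.Adj u w) :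
    G.Adj w x ∨ G.Adj w y := by
  by_contra! ⟨hnwx, hnwy⟩
  have hxw : x ≠ w := by
    rintro rfl
    exact hnwy hxy
  rw [G.adj_comm] at hnwx hnwy
  by_cases hvw : G.Adj v w
  · exact hC4 (C4_isIndContained hxw huv hxu huw hvw.symm hxv.symm hnwx hnuv)
  · rw [G.adj_comm] at hnuv
    exact hchair (chair_isIndContained hyv hxy hxv hxu huw hnyv hnyu hnuv hnwx hnwy hvw)

end InducedSubgraphs

/-- in a chair-free and (induced) `C_4`-free graph, if `x` has
three pairwise non-adjacent neighbours `y`, `u`, `v`, then every neighbour `w`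
of `u` satisfies `w = x`, or `w` is adjacent to `x`, or `w` is adjacent to `y`. -/
theorem stmt_15 {V : Type*} [Fintype V] (G : SimpleGraph V)
    (hchair : ¬ Nonempty (chair ↪g G)) (hC4 : ¬ Nonempty (C4 ↪g G))
    (x y u v : V) (hyu : y ≠ u) (hyv : y ≠ v) (huv : u ≠ v)
    (hxy : G.Adj x y) (hxu : G.Adj x u) (hxv : G.Adj x v)
    (hnyu : ¬ G.Adj y u) (hnyv : ¬ G.Adj y v) (hnuv : ¬ G.Adj u v) :
    ∀ w : V, G.Adj u w → w = x ∨ G.Adj w x ∨ G.Adj w y := by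
  intro w huw
  exact .inr (stmt_15_general hchair hC4 hyv huv hxy hxu hxv hnyu hnyv hnuv huw)
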